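/- Let T = {(x₁,x₂) ∈ ℝ² : x₁ > 0, x₂ > 0, x₁ + x₂ < 1}, α, β, γ > −1, ρ(x₁,x₂) = x₁^α x₂^β (1−x₁−x₂)^γ, and Φ(x₁,x₂) = [[x₁(1−x₁), −x₁x₂], [−x₁x₂, x₂(1−x₂)]]. For every f ∈ L²(T,ρ) there exists a unique (up to a.e. equality) u ∈ W(T,ρ,ρΦ) such that for all v ∈ W(T,ρ,ρΦ), ∫_T (∇v)ᵗ ρΦ ∇u dx₁dx₂ + ∫_T (2+x₁²+x₂²) u v ρ dx₁dx₂ = ∫_T v f ρ dx₁dx₂. -/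

import Mathlib

open MeasureTheory Filter

noncomputable section

abbrev Poly2 := MvPolynomial (Fin 2) ℝ

/-- Evaluation of a two-variable real polynomial at a point of `ℝ × ℝ`. -/
def pev (p : Poly2) (x : ℝ × ℝ) : ℝ := MvPolynomial.eval ![x.1, x.2] p

/-- `uᵗ Φ v` where `Φ` is the matrix with polynomial entries `p11 p12 p21 p22`. -/
def bilPhi (p11 p12 p21 p22 : Poly2) (x u v : ℝ × ℝ) : ℝ :=
  u.1 * (pev p11 x * v.1 + pev p12 x * v.2) + u.2 * (pev p21 x * v.1 + pev p22 x * v.2)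

/-- The (classical) gradient of a two-variable polynomial. -/
def polyGrad (p : Poly2) (x : ℝ × ℝ) : ℝ × ℝ :=
  (pev (MvPolynomial.pderiv (0 : Fin 2) p) x, pev (MvPolynomial.pderiv (1 : Fin 2) p) x)

/-- `ρ` is a weight function on `Ω`. -/
def IsWeight (Ω : Set (ℝ × ℝ)) (ρ : ℝ × ℝ → ℝ) : Prop :=
  Measurable ρ ∧ (∀ᵐ x ∂(volume.restrict Ω), 0 < ρ x) ∧ IntegrableOn ρ Ω

/-- `ρ` is a moment weight function on `Ω`. -/
def IsMomentWeight (Ω : Set (ℝ × ℝ)) (ρ : ℝ × ℝ → ℝ) : Prop :=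
  Measurable ρ ∧ (∀ᵐ x ∂(volume.restrict Ω), 0 < ρ x) ∧
    ∀ m n : ℕ, IntegrableOn (fun x : ℝ × ℝ => |x.1| ^ m * |x.2| ^ n * ρ x) Ω

/-- `Φ` is symmetric and positive definite at every point of `Ω`. -/
def SymPosDef (Ω : Set (ℝ × ℝ)) (p11 p12 p21 p22 : Poly2) : Prop :=
  p12 = p21 ∧ ∀ x ∈ Ω, ∀ ζ : ℝ × ℝ, ζ ≠ 0 → 0 < bilPhi p11 p12 p21 p22 x ζ ζ

/-- `Φ` is symmetric, has entries of degree at most 2, and is positive definite on `Ω`. -/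
def GoodPhi (Ω : Set (ℝ × ℝ)) (p11 p12 p21 p22 : Poly2) : Prop :=
  SymPosDef Ω p11 p12 p21 p22 ∧ p11.totalDegree ≤ 2 ∧ p12.totalDegree ≤ 2 ∧
    p21.totalDegree ≤ 2 ∧ p22.totalDegree ≤ 2

/-- The Pearson equation `div(ρΦ) = ρ(ψ₁,ψ₂)` with explicit degree-one polynomials
`ψⱼ(x) = d_{j1} x₁ + d_{j2} x₂ + e_j` having linearly independent linear parts. -/
def PearsonWith (Ω : Set (ℝ × ℝ)) (ρ : ℝ × ℝ → ℝ) (p11 p12 p21 p22 : Poly2)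
    (d11 d12 d21 d22 e1 e2 : ℝ) : Prop :=
  ContDiffOn ℝ 1 ρ Ω ∧ d11 * d22 - d12 * d21 ≠ 0 ∧
    (∀ x ∈ Ω,
      fderiv ℝ (fun y => ρ y * pev p11 y) x (1, 0) +
        fderiv ℝ (fun y => ρ y * pev p21 y) x (0, 1) = ρ x * (d11 * x.1 + d12 * x.2 + e1)) ∧
    (∀ x ∈ Ω,
      fderiv ℝ (fun y => ρ y * pev p12 y) x (1, 0) +
        fderiv ℝ (fun y => ρ y * pev p22 y) x (0, 1) = ρ x * (d21 * x.1 + d22 * x.2 + e2))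

/-- The Pearson equation `div(ρΦ) = ρ(ψ₁,ψ₂)` for some admissible `ψ₁, ψ₂`. -/
def Pearson (Ω : Set (ℝ × ℝ)) (ρ : ℝ × ℝ → ℝ) (p11 p12 p21 p22 : Poly2) : Prop :=
  ∃ d11 d12 d21 d22 e1 e2 : ℝ, PearsonWith Ω ρ p11 p12 p21 p22 d11 d12 d21 d22 e1 e2

/-- `div(ρΦv)` for a pair of polynomials `v = (v1, v2)`. -/
def divRhoPhi (ρ : ℝ × ℝ → ℝ) (p11 p12 p21 p22 v1 v2 : Poly2) (x : ℝ × ℝ) : ℝ :=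
  fderiv ℝ (fun y => ρ y * (pev p11 y * pev v1 y + pev p12 y * pev v2 y)) x (1, 0) +
    fderiv ℝ (fun y => ρ y * (pev p21 y * pev v1 y + pev p22 y * pev v2 y)) x (0, 1)

/-- Membership in `L²(Ω, ρ)`. -/
def MemL2 (Ω : Set (ℝ × ℝ)) (ρ : ℝ × ℝ → ℝ) (u : ℝ × ℝ → ℝ) : Prop :=
  Measurable u ∧ IntegrableOn (fun x => u x ^ 2 * ρ x) Ω

/-- Membership in the matrix-weighted Lebesgue space `L²(Ω, ρΦ)`. -/
def MemL2M (Ω : Set (ℝ × ℝ)) (ρ : ℝ × ℝ → ℝ) (p11 p12 p21 p22 : Poly2)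
    (w : ℝ × ℝ → ℝ × ℝ) : Prop :=
  Measurable w ∧ IntegrableOn (fun x => ρ x * bilPhi p11 p12 p21 p22 x (w x) (w x)) Ω

/-- `h` is a weak gradient of `u`. -/
def IsWeakGrad (Ω : Set (ℝ × ℝ)) (ρ : ℝ × ℝ → ℝ) (p11 p12 p21 p22 : Poly2)
    (u : ℝ × ℝ → ℝ) (h : ℝ × ℝ → ℝ × ℝ) : Prop :=
  MemL2M Ω ρ p11 p12 p21 p22 h ∧
    ∀ v1 v2 : Poly2,
      ∫ x in Ω, u x * divRhoPhi ρ p11 p12 p21 p22 v1 v2 x =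
        - ∫ x in Ω, ρ x * bilPhi p11 p12 p21 p22 x (h x) (pev v1 x, pev v2 x)

/-- Membership in `W(Ω, ρ, ρΦ)`, the closure of the polynomials in `W^{1,2}(Ω, ρ, ρΦ)`,
for a function `u` with weak gradient `g`. -/
def MemW (Ω : Set (ℝ × ℝ)) (ρ : ℝ × ℝ → ℝ) (p11 p12 p21 p22 : Poly2)
    (u : ℝ × ℝ → ℝ) (g : ℝ × ℝ → ℝ × ℝ) : Prop :=
  MemL2 Ω ρ u ∧ IsWeakGrad Ω ρ p11 p12 p21 p22 u g ∧
    ∀ ε : ℝ, 0 < ε → ∃ q : Poly2,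
      (∫ x in Ω, (u x - pev q x) ^ 2 * ρ x) +
        (∫ x in Ω, ρ x * bilPhi p11 p12 p21 p22 x (g x - polyGrad q x) (g x - polyGrad q x))
          < ε ^ 2

/-- The open triangle with vertices `(0,0)`, `(1,0)`, `(0,1)`. -/
def Ttri : Set (ℝ × ℝ) := {x : ℝ × ℝ | 0 < x.1 ∧ 0 < x.2 ∧ x.1 + x.2 < 1}

/-- The Jacobi-type weight `ρ(x) = x₁^α x₂^β (1−x₁−x₂)^γ`. -/
def rhoT (α β γ : ℝ) (x : ℝ × ℝ) : ℝ :=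
  x.1 ^ α * x.2 ^ β * (1 - x.1 - x.2) ^ γ

/-- The entry `φ₁₁ = x₁(1−x₁)` of the triangle matrix `Φ`. -/
def q11 : Poly2 := MvPolynomial.X 0 * (1 - MvPolynomial.X 0)

/-- The entry `φ₁₂ = φ₂₁ = −x₁x₂` of the triangle matrix `Φ`. -/
def q12 : Poly2 := -(MvPolynomial.X 0 * MvPolynomial.X 1)

/-- The entry `φ₂₂ = x₂(1−x₂)` of the triangle matrix `Φ`. -/
def q22 : Poly2 := MvPolynomial.X 1 * (1 - MvPolynomial.X 1)

/-- The classical gradient of a function of two variables. -/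
def gradF (u : ℝ × ℝ → ℝ) (x : ℝ × ℝ) : ℝ × ℝ :=
  (fderiv ℝ u x (1, 0), fderiv ℝ u x (0, 1))

/-!
Let `c = 2 + x₁² + x₂²` and let `S` be the Cholesky factor of `Φ`, so that `SᵗS = Φ`. The map
`(u, ∇u) ↦ (√(cρ) u, √ρ S∇u)` takes the bilinear form of the problem to the inner product of
`L²(T) × L²(T; ℝ²)`, and since `c` lies between positive constants it identifies `W(T, ρ, ρΦ)`
with the closure of the image of the polynomials. In this picture the weak solution is the
orthogonal projection onto that closed subspace of the vector representing `v ↦ ∫ vfρ`.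

One has to know that every element of the closure still comes from a function with a weak gradient.
The weak gradient identity is orthogonality to a fixed vector, because the Pearson equation makes
`div(ρΦv)/ρ` a polynomial, so it suffices to check it for polynomials. There it says that `ρΦv` has
zero flux through `∂T`. With `x₃ = 1 - x₁ - x₂` this follows from
`Φ = x₁x₃ e₁e₁ᵗ + x₂x₃ e₂e₂ᵗ + x₁x₂ (e₁ - e₂)(e₁ - e₂)ᵗ`: each summand differentiates along one side
of the triangle and vanishes at both ends of every chord parallel to it.
-/

/-! ### Polynomials and the weighted divergence -/

lemma pev_zero (x : ℝ × ℝ) : pev 0 x = 0 := by simp [pev]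

lemma pev_add (p q : Poly2) (x : ℝ × ℝ) : pev (p + q) x = pev p x + pev q x := by simp [pev]

lemma pev_sub (p q : Poly2) (x : ℝ × ℝ) : pev (p - q) x = pev p x - pev q x := by simp [pev]

lemma pev_mul (p q : Poly2) (x : ℝ × ℝ) : pev (p * q) x = pev p x * pev q x := by simp [pev]

lemma pev_smul (a : ℝ) (p : Poly2) (x : ℝ × ℝ) : pev (a • p) x = a * pev p x := by simp [pev]

lemma polyGrad_zero (x : ℝ × ℝ) : polyGrad 0 x = 0 := by simp [polyGrad, pev_zero]

lemma polyGrad_add (p q : Poly2) (x : ℝ × ℝ) :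
    polyGrad (p + q) x = polyGrad p x + polyGrad q x := by
  simp [polyGrad, pev_add]

lemma polyGrad_sub (p q : Poly2) (x : ℝ × ℝ) :
    polyGrad (p - q) x = polyGrad p x - polyGrad q x := by
  simp [polyGrad, pev_sub]

lemma polyGrad_smul (a : ℝ) (p : Poly2) (x : ℝ × ℝ) :
    polyGrad (a • p) x = a • polyGrad p x := by
  simp [polyGrad, pev_smul]

lemma polyGrad_mul (p q : Poly2) (x : ℝ × ℝ) :
    polyGrad (p * q) x = pev p x • polyGrad q x + pev q x • polyGrad p x := by
  simp [polyGrad, pev_add, pev_mul]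

lemma continuous_pev (p : Poly2) : Continuous (pev p) :=
  (MvPolynomial.continuous_eval p).comp (by fun_prop)

lemma continuous_polyGrad (p : Poly2) : Continuous (polyGrad p) :=
  (continuous_pev _).prodMk (continuous_pev _)

lemma hasFDerivAt_pev (p : Poly2) (x : ℝ × ℝ) :
    HasFDerivAt (pev p) ((polyGrad p x).1 • ContinuousLinearMap.fst ℝ ℝ ℝ +
      (polyGrad p x).2 • ContinuousLinearMap.snd ℝ ℝ ℝ) x := by
  induction p using MvPolynomial.induction_on with
  | C a =>
    have hC : pev (MvPolynomial.C a) = fun _ => a := by ext; simp [pev]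
    rw [hC]
    simpa [polyGrad, pev] using hasFDerivAt_const a x
  | add p q hp hq =>
    rw [show pev (p + q) = pev p + pev q from funext (pev_add p q)]
    refine (hp.add hq).congr_fderiv ?_
    ext <;> simp [polyGrad_add]
  | mul_X p i hp =>
    have hX : HasFDerivAt (pev (MvPolynomial.X i))
        ((polyGrad (MvPolynomial.X i) x).1 • ContinuousLinearMap.fst ℝ ℝ ℝ +
          (polyGrad (MvPolynomial.X i) x).2 • ContinuousLinearMap.snd ℝ ℝ ℝ) x := by
      fin_cases i
      · refine (hasFDerivAt_fst (𝕜 := ℝ) (p := x)).congr_of_eventuallyEq ?_ |>.congr_fderiv ?_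
        · exact Eventually.of_forall fun y => by simp [pev]
        · simp [polyGrad, pev]
      · refine (hasFDerivAt_snd (𝕜 := ℝ) (p := x)).congr_of_eventuallyEq ?_ |>.congr_fderiv ?_
        · exact Eventually.of_forall fun y => by simp [pev]
        · simp [polyGrad, pev]
    rw [show pev (p * MvPolynomial.X i) = pev p * pev (MvPolynomial.X i) from funext (pev_mul p _)]
    refine (hp.mul hX).congr_fderiv ?_
    ext <;> simp [polyGrad_mul]

lemma hasDerivAt_pev_comp {p : Poly2} {φ : ℝ → ℝ × ℝ} {φ' : ℝ × ℝ} {t : ℝ}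
    (hφ : HasDerivAt φ φ' t) :
    HasDerivAt (fun s => pev p (φ s))
      ((polyGrad p (φ t)).1 * φ'.1 + (polyGrad p (φ t)).2 * φ'.2) t :=
  ((hasFDerivAt_pev p (φ t)).comp_hasDerivAt t hφ).congr_deriv (by simp)

lemma fderiv_mul_pev {ρ : ℝ × ℝ → ℝ} {x : ℝ × ℝ} (hρ : DifferentiableAt ℝ ρ x) (p : Poly2)
    (ζ : ℝ × ℝ) :
    fderiv ℝ (fun y => ρ y * pev p y) x ζ =
      fderiv ℝ ρ x ζ * pev p x +
        ρ x * ((polyGrad p x).1 * ζ.1 + (polyGrad p x).2 * ζ.2) := by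
  rw [(hρ.hasFDerivAt.fun_mul (hasFDerivAt_pev p x)).fderiv]
  simp only [smul_add, add_apply, smul_apply, ContinuousLinearMap.coe_fst', smul_eq_mul,
    ContinuousLinearMap.coe_snd']
  ring

section Divergence

variable {ρ : ℝ × ℝ → ℝ} {p11 p12 p21 p22 : Poly2} {x : ℝ × ℝ}

lemma divRhoPhi_eq_fderiv_mul_pev (v1 v2 : Poly2) :
    divRhoPhi ρ p11 p12 p21 p22 v1 v2 x =
      fderiv ℝ (fun y => ρ y * pev (p11 * v1 + p12 * v2) y) x (1, 0) +
        fderiv ℝ (fun y => ρ y * pev (p21 * v1 + p22 * v2) y) x (0, 1) := by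
  simp only [divRhoPhi, pev_add, pev_mul]

lemma divRhoPhi_eq_columns (hρ : DifferentiableAt ℝ ρ x) (v1 v2 : Poly2) :
    divRhoPhi ρ p11 p12 p21 p22 v1 v2 x =
      divRhoPhi ρ p11 p12 p21 p22 1 0 x * pev v1 x + divRhoPhi ρ p11 p12 p21 p22 0 1 x * pev v2 x +
        ρ x * (pev p11 x * (polyGrad v1 x).1 + pev p12 x * (polyGrad v2 x).1 +
          pev p21 x * (polyGrad v1 x).2 + pev p22 x * (polyGrad v2 x).2) := by
  simp only [divRhoPhi_eq_fderiv_mul_pev, fderiv_mul_pev hρ]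
  simp only [mul_one, mul_zero, add_zero, zero_add, pev_add, pev_mul, polyGrad_add, polyGrad_mul,
    Prod.fst_add, Prod.snd_add, Prod.smul_fst, Prod.smul_snd, smul_eq_mul]
  ring

lemma divRhoPhi_mul (hρ : DifferentiableAt ℝ ρ x) (q v1 v2 : Poly2) :
    divRhoPhi ρ p11 p12 p21 p22 (q * v1) (q * v2) x =
      pev q x * divRhoPhi ρ p11 p12 p21 p22 v1 v2 x +
        ρ x * bilPhi p11 p12 p21 p22 x (polyGrad q x) (pev v1 x, pev v2 x) := by
  rw [divRhoPhi_eq_columns hρ (q * v1), divRhoPhi_eq_columns hρ v1]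
  simp only [polyGrad_mul, pev_mul, bilPhi, Prod.fst_add, Prod.snd_add, Prod.smul_fst,
    Prod.smul_snd, smul_eq_mul]
  ring

end Divergence

/-! ### Polynomials in the weighted spaces -/

section MomentWeight

variable {Ω : Set (ℝ × ℝ)} {ρ : ℝ × ℝ → ℝ}

lemma IsMomentWeight.integrableOn_pev_mul (hρ : IsMomentWeight Ω ρ) (p : Poly2) :
    IntegrableOn (fun x => pev p x * ρ x) Ω := by
  induction p using MvPolynomial.induction_on' with
  | monomial s a =>
    have hmonomial : ∀ x : ℝ × ℝ,
        pev (MvPolynomial.monomial s a) x = a * (x.1 ^ s 0 * x.2 ^ s 1) := fun x => by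
      simp [pev, MvPolynomial.eval_monomial, Finsupp.prod_fintype]
    refine ((hρ.2.2 (s 0) (s 1)).const_mul a).mono
      ((continuous_pev _).measurable.mul hρ.1).aestronglyMeasurable
      (Eventually.of_forall fun x => le_of_eq ?_)
    simp [hmonomial, mul_assoc]
  | add p q hp hq =>
    simp only [pev_add, add_mul]
    exact hp.add hq

lemma IsMomentWeight.memL2_pev (hρ : IsMomentWeight Ω ρ) (p : Poly2) : MemL2 Ω ρ (pev p) :=
  ⟨(continuous_pev p).measurable,
    by simpa only [pev_mul, pow_two] using hρ.integrableOn_pev_mul (p * p)⟩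

lemma IsMomentWeight.memL2M_pev (hρ : IsMomentWeight Ω ρ) (p11 p12 p21 p22 v1 v2 : Poly2) :
    MemL2M Ω ρ p11 p12 p21 p22 (fun x => (pev v1 x, pev v2 x)) := by
  refine ⟨((continuous_pev v1).prodMk (continuous_pev v2)).measurable, ?_⟩
  simpa only [pev_mul, pev_add, bilPhi, mul_comm (ρ _)] using
    hρ.integrableOn_pev_mul (v1 * (p11 * v1 + p12 * v2) + v2 * (p21 * v1 + p22 * v2))

end MomentWeight

/-! ### Cholesky factorization of `Φ` -/

/-- The upper triangular factor `S(x)` in the Cholesky factorization `SᵗS = Φ(x)` of a symmetric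
positive definite `Φ`, whose off-diagonal entries are both `p12`. -/
def choleskyMap (p11 p12 p22 : Poly2) (x : ℝ × ℝ) : ℝ × ℝ →ₗ[ℝ] EuclideanSpace ℝ (Fin 2) where
  toFun ζ := !₂[√(pev p11 x) * (ζ.1 + pev p12 x / pev p11 x * ζ.2),
    √(pev p22 x - pev p12 x ^ 2 / pev p11 x) * ζ.2]
  map_add' ζ ξ := by ext i; fin_cases i <;> simp <;> ring
  map_smul' a ζ := by ext i; fin_cases i <;> simp <;> ring

/-- The inverse of `choleskyMap`, by back substitution. -/
def choleskyInv (p11 p12 p22 : Poly2) (x : ℝ × ℝ) (z : EuclideanSpace ℝ (Fin 2)) : ℝ × ℝ :=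
  (z 0 / √(pev p11 x) -
      pev p12 x / pev p11 x * (z 1 / √(pev p22 x - pev p12 x ^ 2 / pev p11 x)),
    z 1 / √(pev p22 x - pev p12 x ^ 2 / pev p11 x))

section Cholesky

variable {Ω : Set (ℝ × ℝ)} {p11 p12 p21 p22 : Poly2} {x : ℝ × ℝ}

lemma measurable_choleskyMap {g : ℝ × ℝ → ℝ × ℝ} (hg : Measurable g) :
    Measurable fun x => choleskyMap p11 p12 p22 x (g x) := by
  have h11 := (continuous_pev p11).measurable
  have h12 := (continuous_pev p12).measurable
  have h22 := (continuous_pev p22).measurable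
  refine (WithLp.measurable_toLp 2 _).comp (measurable_pi_iff.2 fun i => ?_)
  fin_cases i
  · change Measurable fun x => √(pev p11 x) * ((g x).1 + pev p12 x / pev p11 x * (g x).2)
    fun_prop
  · change Measurable fun x => √(pev p22 x - pev p12 x ^ 2 / pev p11 x) * (g x).2
    fun_prop

lemma measurable_choleskyInv {Z : ℝ × ℝ → EuclideanSpace ℝ (Fin 2)} (hZ : Measurable Z) :
    Measurable fun x => choleskyInv p11 p12 p22 x (Z x) := by
  have h11 := (continuous_pev p11).measurable
  have h12 := (continuous_pev p12).measurable
  have h22 := (continuous_pev p22).measurable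
  unfold choleskyInv
  fun_prop

lemma SymPosDef.pev_pos (hΦ : SymPosDef Ω p11 p12 p21 p22) (hx : x ∈ Ω) : 0 < pev p11 x := by
  simpa [bilPhi] using hΦ.2 x hx (1, 0) (by simp)

lemma SymPosDef.schur_pos (hΦ : SymPosDef Ω p11 p12 p21 p22) (hx : x ∈ Ω) :
    0 < pev p22 x - pev p12 x ^ 2 / pev p11 x := by
  have h11 := hΦ.pev_pos hx
  obtain ⟨rfl, hpos⟩ := hΦ
  have hschur := hpos x hx (-(pev p12 x / pev p11 x), 1) (by simp)
  refine hschur.trans_eq ?_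
  simp only [bilPhi]
  field_simp
  ring

lemma SymPosDef.inner_choleskyMap (hΦ : SymPosDef Ω p11 p12 p21 p22) (hx : x ∈ Ω)
    (ζ ξ : ℝ × ℝ) :
    inner ℝ (choleskyMap p11 p12 p22 x ζ) (choleskyMap p11 p12 p22 x ξ) =
      bilPhi p11 p12 p21 p22 x ζ ξ := by
  have h11 := hΦ.pev_pos hx
  have hschur := hΦ.schur_pos hx
  obtain ⟨rfl, -⟩ := hΦ
  calc inner ℝ (choleskyMap p11 p12 p22 x ζ) (choleskyMap p11 p12 p22 x ξ)
    _ = √(pev p11 x) ^ 2 * ((ζ.1 + pev p12 x / pev p11 x * ζ.2) *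
          (ξ.1 + pev p12 x / pev p11 x * ξ.2)) +
        √(pev p22 x - pev p12 x ^ 2 / pev p11 x) ^ 2 * (ζ.2 * ξ.2) := by
      simp only [choleskyMap, LinearMap.coe_mk, AddHom.coe_mk, PiLp.inner_apply,
        RCLike.inner_apply, Real.ringHom_apply, Fin.sum_univ_two, Fin.isValue,
        Matrix.cons_val_zero, Matrix.cons_val_one, Matrix.cons_val_fin_one]
      ring
    _ = bilPhi p11 p12 p12 p22 x ζ ξ := by
      rw [Real.sq_sqrt h11.le, Real.sq_sqrt hschur.le, bilPhi]
      field_simp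
      ring

lemma SymPosDef.choleskyMap_choleskyInv (hΦ : SymPosDef Ω p11 p12 p21 p22) (hx : x ∈ Ω)
    (z : EuclideanSpace ℝ (Fin 2)) :
    choleskyMap p11 p12 p22 x (choleskyInv p11 p12 p22 x z) = z := by
  have h11 := (Real.sqrt_pos.2 (hΦ.pev_pos hx)).ne'
  have hschur := (Real.sqrt_pos.2 (hΦ.schur_pos hx)).ne'
  ext i
  fin_cases i
  · simp [choleskyMap, choleskyInv, mul_div_cancel₀ _ h11]
  · simp [choleskyMap, choleskyInv, mul_div_cancel₀ _ hschur]

end Cholesky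

/-! ### The energy space -/

/-- The Hilbert space `L²(Ω) × L²(Ω; ℝ²)`, in which the pairs `(u, ∇u)` are realized. -/
abbrev EnergySpace (Ω : Set (ℝ × ℝ)) :=
  WithLp 2 (Lp ℝ 2 (volume.restrict Ω) × Lp (EuclideanSpace ℝ (Fin 2)) 2 (volume.restrict Ω))

/-- The conditions on the weights `w`, `ρ` and the matrix `Φ` under which
`∫ uvw + ∫ gᵗ ρΦ h` is an inner product on `L²(Ω,w) × L²(Ω,ρΦ)`. -/
structure IsEnergyWeight (Ω : Set (ℝ × ℝ)) (w ρ : ℝ × ℝ → ℝ) (p11 p12 p21 p22 : Poly2) :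
    Prop where
  measurableSet : MeasurableSet Ω
  measurable_left : Measurable w
  left_pos : ∀ᵐ x ∂volume.restrict Ω, 0 < w x
  measurable_right : Measurable ρ
  right_pos : ∀ᵐ x ∂volume.restrict Ω, 0 < ρ x
  symPosDef : SymPosDef Ω p11 p12 p21 p22

/-- `Z` is the image of `(u, g)` under the isometry
`L²(Ω,w) × L²(Ω,ρΦ) → L²(Ω) × L²(Ω; ℝ²)`, `(u, g) ↦ (√w u, √ρ S g)`, where `SᵗS = Φ`.
It is a relation and not a function because `u` and `g` are functions and `Z` is a pair of classes
of functions modulo a.e. equality. -/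
structure EnergyRep (Ω : Set (ℝ × ℝ)) (w ρ : ℝ × ℝ → ℝ) (p11 p12 p22 : Poly2)
    (u : ℝ × ℝ → ℝ) (g : ℝ × ℝ → ℝ × ℝ) (Z : EnergySpace Ω) : Prop where
  measurable_fun : Measurable u
  measurable_grad : Measurable g
  fst_ae_eq : Z.fst =ᵐ[volume.restrict Ω] fun x => √(w x) * u x
  snd_ae_eq : Z.snd =ᵐ[volume.restrict Ω] fun x => √(ρ x) • choleskyMap p11 p12 p22 x (g x)

namespace EnergyRep

variable {Ω : Set (ℝ × ℝ)} {w ρ : ℝ × ℝ → ℝ} {p11 p12 p21 p22 : Poly2}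
  {u v : ℝ × ℝ → ℝ} {g h : ℝ × ℝ → ℝ × ℝ} {Z V : EnergySpace Ω}

lemma zero : EnergyRep Ω w ρ p11 p12 p22 0 0 0 where
  measurable_fun := measurable_zero
  measurable_grad := measurable_zero
  fst_ae_eq := by
    filter_upwards [Lp.coeFn_zero ℝ 2 (volume.restrict Ω)] with x hx
    simp only [WithLp.zero_fst, hx, Pi.zero_apply, mul_zero]
  snd_ae_eq := by
    filter_upwards [Lp.coeFn_zero (EuclideanSpace ℝ (Fin 2)) 2 (volume.restrict Ω)] with x hx
    simp only [WithLp.zero_snd, hx, Pi.zero_apply, map_zero, smul_zero]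

lemma add (hZ : EnergyRep Ω w ρ p11 p12 p22 u g Z) (hV : EnergyRep Ω w ρ p11 p12 p22 v h V) :
    EnergyRep Ω w ρ p11 p12 p22 (u + v) (g + h) (Z + V) where
  measurable_fun := hZ.measurable_fun.add hV.measurable_fun
  measurable_grad := hZ.measurable_grad.add hV.measurable_grad
  fst_ae_eq := by
    filter_upwards [hZ.fst_ae_eq, hV.fst_ae_eq, Lp.coeFn_add Z.fst V.fst] with x hZx hVx hadd
    simp only [WithLp.add_fst, hadd, Pi.add_apply, hZx, hVx, mul_add]
  snd_ae_eq := by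
    filter_upwards [hZ.snd_ae_eq, hV.snd_ae_eq, Lp.coeFn_add Z.snd V.snd] with x hZx hVx hadd
    simp only [WithLp.add_snd, hadd, Pi.add_apply, hZx, hVx, map_add, smul_add]

lemma smul (hZ : EnergyRep Ω w ρ p11 p12 p22 u g Z) (a : ℝ) :
    EnergyRep Ω w ρ p11 p12 p22 (a • u) (a • g) (a • Z) where
  measurable_fun := hZ.measurable_fun.const_smul a
  measurable_grad := hZ.measurable_grad.const_smul a
  fst_ae_eq := by
    filter_upwards [hZ.fst_ae_eq, Lp.coeFn_smul a Z.fst] with x hZx hsmul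
    simp only [WithLp.smul_fst, hsmul, Pi.smul_apply, hZx, smul_eq_mul, mul_left_comm]
  snd_ae_eq := by
    filter_upwards [hZ.snd_ae_eq, Lp.coeFn_smul a Z.snd] with x hZx hsmul
    simp only [WithLp.smul_snd, hsmul, Pi.smul_apply, hZx, map_smul, smul_comm a]

lemma sub (hZ : EnergyRep Ω w ρ p11 p12 p22 u g Z) (hV : EnergyRep Ω w ρ p11 p12 p22 v h V) :
    EnergyRep Ω w ρ p11 p12 p22 (u - v) (g - h) (Z - V) := by
  simpa only [neg_smul, one_smul, ← sub_eq_add_neg] using hZ.add (hV.smul (-1))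

lemma inner_eq (hw : IsEnergyWeight Ω w ρ p11 p12 p21 p22)
    (hZ : EnergyRep Ω w ρ p11 p12 p22 u g Z) (hV : EnergyRep Ω w ρ p11 p12 p22 v h V) :
    inner ℝ Z V =
      (∫ x in Ω, u x * v x * w x) + ∫ x in Ω, ρ x * bilPhi p11 p12 p21 p22 x (g x) (h x) := by
  rw [WithLp.prod_inner_apply]
  congr 1
  · refine (L2.inner_def Z.fst V.fst).trans (integral_congr_ae ?_)
    filter_upwards [hZ.fst_ae_eq, hV.fst_ae_eq, hw.left_pos] with x hZx hVx hwx
    simp only [hZx, hVx, RCLike.inner_apply, conj_trivial]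
    linear_combination u x * v x * Real.sq_sqrt hwx.le
  · refine (L2.inner_def Z.snd V.snd).trans (integral_congr_ae ?_)
    filter_upwards [hZ.snd_ae_eq, hV.snd_ae_eq, hw.right_pos, ae_restrict_mem hw.measurableSet]
      with x hZx hVx hρx hx
    rw [hZx, hVx, real_inner_smul_left, real_inner_smul_right, hw.symPosDef.inner_choleskyMap hx,
      ← mul_assoc, Real.mul_self_sqrt hρx.le]

lemma norm_sq_eq (hw : IsEnergyWeight Ω w ρ p11 p12 p21 p22)
    (hZ : EnergyRep Ω w ρ p11 p12 p22 u g Z) :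
    ‖Z‖ ^ 2 =
      (∫ x in Ω, u x ^ 2 * w x) + ∫ x in Ω, ρ x * bilPhi p11 p12 p21 p22 x (g x) (g x) := by
  rw [← real_inner_self_eq_norm_sq, hZ.inner_eq hw hZ]
  simp only [pow_two]

lemma ae_eq (hw : IsEnergyWeight Ω w ρ p11 p12 p21 p22)
    (hu : EnergyRep Ω w ρ p11 p12 p22 u g Z) (hv : EnergyRep Ω w ρ p11 p12 p22 v h Z) :
    u =ᵐ[volume.restrict Ω] v := by
  filter_upwards [hu.fst_ae_eq, hv.fst_ae_eq, hw.left_pos] with x hux hvx hwx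
  exact mul_left_cancel₀ (Real.sqrt_pos.2 hwx).ne' (hux.symm.trans hvx)

end EnergyRep

namespace IsEnergyWeight

variable {Ω : Set (ℝ × ℝ)} {w ρ : ℝ × ℝ → ℝ} {p11 p12 p21 p22 : Poly2}
  {u : ℝ × ℝ → ℝ} {g : ℝ × ℝ → ℝ × ℝ} {Z : EnergySpace Ω}

lemma memLp_sqrt_mul_iff (hw : IsEnergyWeight Ω w ρ p11 p12 p21 p22) (hu : Measurable u) :
    MemLp (fun x => √(w x) * u x) 2 (volume.restrict Ω) ↔ MemL2 Ω w u := by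
  have hmeas : Measurable fun x => √(w x) * u x := hw.measurable_left.sqrt.mul hu
  rw [memLp_two_iff_integrable_sq_norm hmeas.aestronglyMeasurable, MemL2, and_iff_right hu]
  refine integrable_congr ?_
  filter_upwards [hw.left_pos] with x hwx
  rw [Real.norm_eq_abs, sq_abs, mul_pow, Real.sq_sqrt hwx.le, mul_comm]

lemma memLp_sqrt_smul_choleskyMap_iff (hw : IsEnergyWeight Ω w ρ p11 p12 p21 p22)
    (hg : Measurable g) :
    MemLp (fun x => √(ρ x) • choleskyMap p11 p12 p22 x (g x)) 2 (volume.restrict Ω) ↔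
      MemL2M Ω ρ p11 p12 p21 p22 g := by
  have hmeas : Measurable fun x => √(ρ x) • choleskyMap p11 p12 p22 x (g x) :=
    hw.measurable_right.sqrt.smul (measurable_choleskyMap hg)
  rw [memLp_two_iff_integrable_sq_norm hmeas.aestronglyMeasurable, MemL2M, and_iff_right hg]
  refine integrable_congr ?_
  filter_upwards [hw.right_pos, ae_restrict_mem hw.measurableSet] with x hρx hx
  rw [norm_smul, mul_pow, Real.norm_eq_abs, sq_abs, Real.sq_sqrt hρx.le,
    ← real_inner_self_eq_norm_sq, hw.symPosDef.inner_choleskyMap hx]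

lemma memL2_of_energyRep (hw : IsEnergyWeight Ω w ρ p11 p12 p21 p22)
    (hZ : EnergyRep Ω w ρ p11 p12 p22 u g Z) : MemL2 Ω w u :=
  (hw.memLp_sqrt_mul_iff hZ.measurable_fun).1 ((memLp_congr_ae hZ.fst_ae_eq).1 (Lp.memLp _))

lemma memL2M_of_energyRep (hw : IsEnergyWeight Ω w ρ p11 p12 p21 p22)
    (hZ : EnergyRep Ω w ρ p11 p12 p22 u g Z) : MemL2M Ω ρ p11 p12 p21 p22 g :=
  (hw.memLp_sqrt_smul_choleskyMap_iff hZ.measurable_grad).1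
    ((memLp_congr_ae hZ.snd_ae_eq).1 (Lp.memLp _))

lemma exists_energyRep_of_memL2 (hw : IsEnergyWeight Ω w ρ p11 p12 p21 p22) (hu : MemL2 Ω w u)
    (hg : MemL2M Ω ρ p11 p12 p21 p22 g) : ∃ Z, EnergyRep Ω w ρ p11 p12 p22 u g Z := by
  have hfst := (hw.memLp_sqrt_mul_iff hu.1).2 hu
  have hsnd := (hw.memLp_sqrt_smul_choleskyMap_iff hg.1).2 hg
  exact ⟨WithLp.toLp 2 (hfst.toLp, hsnd.toLp), hu.1, hg.1, hfst.coeFn_toLp, hsnd.coeFn_toLp⟩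

lemma exists_energyRep (hw : IsEnergyWeight Ω w ρ p11 p12 p21 p22) (Z : EnergySpace Ω) :
    ∃ u g, EnergyRep Ω w ρ p11 p12 p22 u g Z := by
  refine ⟨fun x => Z.fst x / √(w x), fun x => choleskyInv p11 p12 p22 x ((√(ρ x))⁻¹ • Z.snd x),
    ?_, ?_, ?_, ?_⟩
  · exact (Lp.stronglyMeasurable Z.fst).measurable.div hw.measurable_left.sqrt
  · exact measurable_choleskyInv
      (hw.measurable_right.sqrt.inv.smul (Lp.stronglyMeasurable Z.snd).measurable)
  · filter_upwards [hw.left_pos] with x hwx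
    rw [mul_div_cancel₀ _ (Real.sqrt_pos.2 hwx).ne']
  · filter_upwards [hw.right_pos, ae_restrict_mem hw.measurableSet] with x hρx hx
    rw [hw.symPosDef.choleskyMap_choleskyInv hx, smul_inv_smul₀ (Real.sqrt_pos.2 hρx).ne']

end IsEnergyWeight

/-! ### Zeroth-order coefficients -/

/-- `c` is an admissible coefficient of the zeroth-order term: it is measurable, and a.e. on `Ω`
it lies between the positive constant `m` and the constant `M`. -/
structure IsCoefficient (Ω : Set (ℝ × ℝ)) (c : ℝ × ℝ → ℝ) (m M : ℝ) : Prop where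
  measurable : Measurable c
  lower_pos : 0 < m
  lower_le : ∀ᵐ x ∂volume.restrict Ω, m ≤ c x
  le_upper : ∀ᵐ x ∂volume.restrict Ω, c x ≤ M

namespace IsCoefficient

variable {Ω : Set (ℝ × ℝ)} {c : ℝ × ℝ → ℝ} {m M : ℝ}

lemma ae_pos (hc : IsCoefficient Ω c m M) : ∀ᵐ x ∂volume.restrict Ω, 0 < c x :=
  hc.lower_le.mono fun _ hx => hc.lower_pos.trans_le hx

lemma integrableOn_mul_iff (hc : IsCoefficient Ω c m M) {φ : ℝ × ℝ → ℝ} :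
    IntegrableOn (fun x => c x * φ x) Ω ↔ IntegrableOn φ Ω := by
  refine ⟨fun hφ => ?_, fun hφ => ?_⟩
  · have hinv : ∀ᵐ x ∂volume.restrict Ω, ‖(c x)⁻¹‖ ≤ m⁻¹ := by
      filter_upwards [hc.ae_pos, hc.lower_le] with x hpos hle
      rw [Real.norm_of_nonneg (inv_nonneg.2 hpos.le)]
      exact inv_anti₀ hc.lower_pos hle
    refine (Integrable.bdd_mul hφ hc.measurable.inv.aestronglyMeasurable hinv).congr ?_
    filter_upwards [hc.ae_pos] with x hpos using inv_mul_cancel_left₀ hpos.ne' _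
  · refine hφ.bdd_mul hc.measurable.aestronglyMeasurable (c := M) ?_
    filter_upwards [hc.ae_pos, hc.le_upper] with x hpos hle
    rwa [Real.norm_of_nonneg hpos.le]

lemma setIntegral_mul_mem_Icc (hc : IsCoefficient Ω c m M) {φ : ℝ × ℝ → ℝ}
    (hφ : IntegrableOn φ Ω) (hφ_nonneg : ∀ᵐ x ∂volume.restrict Ω, 0 ≤ φ x) :
    ∫ x in Ω, c x * φ x ∈ Set.Icc (m * ∫ x in Ω, φ x) (M * ∫ x in Ω, φ x) := by
  rw [← integral_const_mul, ← integral_const_mul]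
  refine ⟨integral_mono_ae (hφ.const_mul m) (hc.integrableOn_mul_iff.2 hφ) ?_,
    integral_mono_ae (hc.integrableOn_mul_iff.2 hφ) (hφ.const_mul M) ?_⟩
  · filter_upwards [hc.lower_le, hφ_nonneg] with x hle hnonneg
      using mul_le_mul_of_nonneg_right hle hnonneg
  · filter_upwards [hc.le_upper, hφ_nonneg] with x hle hnonneg
      using mul_le_mul_of_nonneg_right hle hnonneg

lemma memL2_mul_iff (hc : IsCoefficient Ω c m M) {ρ u : ℝ × ℝ → ℝ} :
    MemL2 Ω (fun x => c x * ρ x) u ↔ MemL2 Ω ρ u := by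
  simp only [MemL2, mul_left_comm _ (c _), hc.integrableOn_mul_iff]

lemma memL2_div (hc : IsCoefficient Ω c m M) {ρ f : ℝ × ℝ → ℝ} (hf : MemL2 Ω ρ f) :
    MemL2 Ω ρ (fun x => f x / c x) := by
  refine ⟨hf.1.div hc.measurable, ?_⟩
  refine hc.integrableOn_mul_iff.1 (hc.integrableOn_mul_iff.1 (hf.2.congr ?_))
  filter_upwards [hc.ae_pos] with x hpos
  field_simp

end IsCoefficient

/-! ### The weighted Sobolev space as a closed subspace -/

/-- The conditions on `ρ` and `Φ` that make polynomials weakly differentiable with their classical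
gradient as weak gradient: `ρ` is a differentiable moment weight satisfying a Pearson equation
`div(ρΦ) = ρ(ψ₁,ψ₂)` with polynomial right-hand side, and the polynomial fields `ρΦv` have no
flux through the boundary of `Ω`. -/
structure IsSobolevWeight (Ω : Set (ℝ × ℝ)) (ρ : ℝ × ℝ → ℝ) (p11 p12 p21 p22 : Poly2) :
    Prop where
  measurableSet : MeasurableSet Ω
  isMomentWeight : IsMomentWeight Ω ρ
  symPosDef : SymPosDef Ω p11 p12 p21 p22
  differentiableAt : ∀ x ∈ Ω, DifferentiableAt ℝ ρ x
  exists_pearson : ∃ ψ₁ ψ₂ : Poly2, ∀ x ∈ Ω,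
    divRhoPhi ρ p11 p12 p21 p22 1 0 x = ρ x * pev ψ₁ x ∧
      divRhoPhi ρ p11 p12 p21 p22 0 1 x = ρ x * pev ψ₂ x
  setIntegral_divRhoPhi : ∀ v1 v2 : Poly2, ∫ x in Ω, divRhoPhi ρ p11 p12 p21 p22 v1 v2 x = 0

/-- The squared norm `∫ u²ρ + ∫ gᵗ ρΦ g` of a function `u` with weak gradient `g`. -/
def sobolevNormSq (Ω : Set (ℝ × ℝ)) (ρ : ℝ × ℝ → ℝ) (p11 p12 p21 p22 : Poly2)
    (u : ℝ × ℝ → ℝ) (g : ℝ × ℝ → ℝ × ℝ) : ℝ :=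
  (∫ x in Ω, u x ^ 2 * ρ x) + ∫ x in Ω, ρ x * bilPhi p11 p12 p21 p22 x (g x) (g x)

/-- The image in the energy space of the pairs `(q, ∇q)`, for `q` a polynomial. -/
def polyEnergy (Ω : Set (ℝ × ℝ)) (w ρ : ℝ × ℝ → ℝ) (p11 p12 p22 : Poly2) :
    Submodule ℝ (EnergySpace Ω) where
  carrier := {Z | ∃ q, EnergyRep Ω w ρ p11 p12 p22 (pev q) (polyGrad q) Z}
  zero_mem' := by
    refine ⟨0, ?_⟩
    rw [funext pev_zero, funext polyGrad_zero]
    exact .zero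
  add_mem' := by
    rintro Y Z ⟨p, hp⟩ ⟨q, hq⟩
    refine ⟨p + q, ?_⟩
    rw [funext (pev_add p q), funext (polyGrad_add p q)]
    exact hp.add hq
  smul_mem' := by
    rintro a Z ⟨q, hq⟩
    refine ⟨a • q, ?_⟩
    rw [funext (pev_smul a q), funext (polyGrad_smul a q)]
    exact hq.smul a

/-- The space `W(Ω, ρ, ρΦ)`, realized as a closed subspace of the energy space. The weight `w` of
the functions is kept separate from `ρ` because it will absorb the zeroth-order coefficient. -/
def sobolevSpace (Ω : Set (ℝ × ℝ)) (w ρ : ℝ × ℝ → ℝ) (p11 p12 p22 : Poly2) :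
    Submodule ℝ (EnergySpace Ω) :=
  (polyEnergy Ω w ρ p11 p12 p22).topologicalClosure

instance (Ω : Set (ℝ × ℝ)) (w ρ : ℝ × ℝ → ℝ) (p11 p12 p22 : Poly2) :
    CompleteSpace (sobolevSpace Ω w ρ p11 p12 p22) :=
  (Submodule.isClosed_topologicalClosure _).completeSpace_coe

namespace IsSobolevWeight

variable {Ω : Set (ℝ × ℝ)} {ρ c : ℝ × ℝ → ℝ} {p11 p12 p21 p22 : Poly2} {m M : ℝ}
  {u f : ℝ × ℝ → ℝ} {g k : ℝ × ℝ → ℝ × ℝ} {Z F : EnergySpace Ω}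

lemma isEnergyWeight (hρ : IsSobolevWeight Ω ρ p11 p12 p21 p22) (hc : IsCoefficient Ω c m M) :
    IsEnergyWeight Ω (fun x => c x * ρ x) ρ p11 p12 p21 p22 where
  measurableSet := hρ.measurableSet
  measurable_left := hc.measurable.mul hρ.isMomentWeight.1
  left_pos := by
    filter_upwards [hc.ae_pos, hρ.isMomentWeight.2.1] with x hcx hρx using mul_pos hcx hρx
  measurable_right := hρ.isMomentWeight.1
  right_pos := hρ.isMomentWeight.2.1
  symPosDef := hρ.symPosDef

lemma exists_divRhoPhi_eq (hρ : IsSobolevWeight Ω ρ p11 p12 p21 p22) (v1 v2 : Poly2) :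
    ∃ p : Poly2, ∀ x ∈ Ω, divRhoPhi ρ p11 p12 p21 p22 v1 v2 x = pev p x * ρ x := by
  obtain ⟨ψ₁, ψ₂, hψ⟩ := hρ.exists_pearson
  refine ⟨ψ₁ * v1 + ψ₂ * v2 + (p11 * MvPolynomial.pderiv 0 v1 + p12 * MvPolynomial.pderiv 0 v2 +
    p21 * MvPolynomial.pderiv 1 v1 + p22 * MvPolynomial.pderiv 1 v2), fun x hx => ?_⟩
  rw [divRhoPhi_eq_columns (hρ.differentiableAt x hx), (hψ x hx).1, (hψ x hx).2]
  simp only [pev_add, pev_mul, polyGrad]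
  ring

lemma setIntegral_pev_mul_divRhoPhi (hρ : IsSobolevWeight Ω ρ p11 p12 p21 p22)
    (q v1 v2 : Poly2) :
    (∫ x in Ω, pev q x * divRhoPhi ρ p11 p12 p21 p22 v1 v2 x) +
      ∫ x in Ω, ρ x * bilPhi p11 p12 p21 p22 x (polyGrad q x) (pev v1 x, pev v2 x) = 0 := by
  obtain ⟨p, hp⟩ := hρ.exists_divRhoPhi_eq v1 v2
  have hdiv : IntegrableOn (fun x => pev q x * divRhoPhi ρ p11 p12 p21 p22 v1 v2 x) Ω := by
    refine (hρ.isMomentWeight.integrableOn_pev_mul (q * p)).congr_fun (fun x hx => ?_)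
      hρ.measurableSet
    simp only [hp x hx, pev_mul, mul_assoc]
  have hgrad : IntegrableOn
      (fun x => ρ x * bilPhi p11 p12 p21 p22 x (polyGrad q x) (pev v1 x, pev v2 x)) Ω := by
    simpa only [pev_add, pev_mul, bilPhi, polyGrad, mul_comm (ρ _)] using
      hρ.isMomentWeight.integrableOn_pev_mul
        (MvPolynomial.pderiv 0 q * (p11 * v1 + p12 * v2) +
          MvPolynomial.pderiv 1 q * (p21 * v1 + p22 * v2))
  rw [← integral_add hdiv hgrad, ← hρ.setIntegral_divRhoPhi (q * v1) (q * v2)]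
  exact setIntegral_congr_fun hρ.measurableSet fun x hx =>
    (divRhoPhi_mul (hρ.differentiableAt x hx) q v1 v2).symm

lemma exists_representer (hρ : IsSobolevWeight Ω ρ p11 p12 p21 p22) (hc : IsCoefficient Ω c m M)
    (hf : MemL2 Ω ρ f) (hk : MemL2M Ω ρ p11 p12 p21 p22 k) :
    ∃ F, EnergyRep Ω (fun x => c x * ρ x) ρ p11 p12 p22 (fun x => f x / c x) k F :=
  (hρ.isEnergyWeight hc).exists_energyRep_of_memL2 (hc.memL2_mul_iff.2 (hc.memL2_div hf)) hk

lemma inner_representer (hρ : IsSobolevWeight Ω ρ p11 p12 p21 p22) (hc : IsCoefficient Ω c m M)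
    (hZ : EnergyRep Ω (fun x => c x * ρ x) ρ p11 p12 p22 u g Z)
    (hF : EnergyRep Ω (fun x => c x * ρ x) ρ p11 p12 p22 (fun x => f x / c x) k F) :
    inner ℝ Z F =
      (∫ x in Ω, u x * f x * ρ x) + ∫ x in Ω, ρ x * bilPhi p11 p12 p21 p22 x (g x) (k x) := by
  rw [hZ.inner_eq (hρ.isEnergyWeight hc) hF]
  congr 1
  refine integral_congr_ae ?_
  filter_upwards [hc.ae_pos] with x hcx
  field_simp

/-- The weak gradient identity says that `(u, g)` is orthogonal to a fixed vector, hence it passes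
from polynomials to the closure. -/
lemma isWeakGrad_of_mem_sobolevSpace (hρ : IsSobolevWeight Ω ρ p11 p12 p21 p22)
    (hc : IsCoefficient Ω c m M) (hZ : EnergyRep Ω (fun x => c x * ρ x) ρ p11 p12 p22 u g Z)
    (hmem : Z ∈ sobolevSpace Ω (fun x => c x * ρ x) ρ p11 p12 p22) :
    IsWeakGrad Ω ρ p11 p12 p21 p22 u g := by
  refine ⟨(hρ.isEnergyWeight hc).memL2M_of_energyRep hZ, fun v1 v2 => ?_⟩
  obtain ⟨p, hp⟩ := hρ.exists_divRhoPhi_eq v1 v2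
  obtain ⟨F, hF⟩ := hρ.exists_representer hc (hρ.isMomentWeight.memL2_pev p)
    (hρ.isMomentWeight.memL2M_pev p11 p12 p21 p22 v1 v2)
  have inner_eq : ∀ {u g Z}, EnergyRep Ω (fun x => c x * ρ x) ρ p11 p12 p22 u g Z →
      inner ℝ Z F = (∫ x in Ω, u x * divRhoPhi ρ p11 p12 p21 p22 v1 v2 x) +
        ∫ x in Ω, ρ x * bilPhi p11 p12 p21 p22 x (g x) (pev v1 x, pev v2 x) := fun {u g Z} hZ => by
    rw [hρ.inner_representer hc hZ hF]
    congr 1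
    refine setIntegral_congr_fun hρ.measurableSet fun x hx => ?_
    simp only [hp x hx, mul_assoc]
  have hle : sobolevSpace Ω (fun x => c x * ρ x) ρ p11 p12 p22 ≤ (ℝ ∙ F)ᗮ := by
    refine Submodule.topologicalClosure_minimal _ ?_ (Submodule.isClosed_orthogonal _)
    rintro Y ⟨q, hq⟩
    rw [Submodule.mem_orthogonal_singleton_iff_inner_left, inner_eq hq,
      hρ.setIntegral_pev_mul_divRhoPhi]
  have hzero := Submodule.mem_orthogonal_singleton_iff_inner_left.1 (hle hmem)
  exact eq_neg_of_add_eq_zero_left ((inner_eq hZ).symm.trans hzero)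

lemma norm_sq_mem_Icc (hρ : IsSobolevWeight Ω ρ p11 p12 p21 p22) (hc : IsCoefficient Ω c m M)
    (hZ : EnergyRep Ω (fun x => c x * ρ x) ρ p11 p12 p22 u g Z) :
    ‖Z‖ ^ 2 ∈ Set.Icc (min 1 m * sobolevNormSq Ω ρ p11 p12 p21 p22 u g)
      (max 1 M * sobolevNormSq Ω ρ p11 p12 p21 p22 u g) := by
  have hu := hc.memL2_mul_iff.1 ((hρ.isEnergyWeight hc).memL2_of_energyRep hZ)
  have hu_nonneg : ∀ᵐ x ∂volume.restrict Ω, 0 ≤ u x ^ 2 * ρ x := by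
    filter_upwards [hρ.isMomentWeight.2.1] with x hρx
    positivity
  have hg_nonneg : 0 ≤ ∫ x in Ω, ρ x * bilPhi p11 p12 p21 p22 x (g x) (g x) := by
    refine integral_nonneg_of_ae ?_
    filter_upwards [hρ.isMomentWeight.2.1, ae_restrict_mem hρ.measurableSet] with x hρx hx
    rw [← hρ.symPosDef.inner_choleskyMap hx]
    exact mul_nonneg hρx.le real_inner_self_nonneg
  obtain ⟨hlower, hupper⟩ := hc.setIntegral_mul_mem_Icc hu.2 hu_nonneg
  have hu_integral_nonneg := integral_nonneg_of_ae hu_nonneg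
  simp only [hZ.norm_sq_eq (hρ.isEnergyWeight hc), sobolevNormSq, mul_left_comm _ (c _), mul_add]
  constructor
  · gcongr
    · exact (mul_le_mul_of_nonneg_right (min_le_right 1 m) hu_integral_nonneg).trans hlower
    · exact mul_le_of_le_one_left hg_nonneg (min_le_left 1 m)
  · gcongr
    · exact hupper.trans (mul_le_mul_of_nonneg_right (le_max_right 1 M) hu_integral_nonneg)
    · exact le_mul_of_one_le_left hg_nonneg (le_max_left 1 M)

lemma mem_sobolevSpace_iff (hρ : IsSobolevWeight Ω ρ p11 p12 p21 p22)
    (hc : IsCoefficient Ω c m M) (hZ : EnergyRep Ω (fun x => c x * ρ x) ρ p11 p12 p22 u g Z) :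
    Z ∈ sobolevSpace Ω (fun x => c x * ρ x) ρ p11 p12 p22 ↔
      ∀ ε : ℝ, 0 < ε → ∃ q : Poly2,
        sobolevNormSq Ω ρ p11 p12 p21 p22 (u - pev q) (g - polyGrad q) < ε ^ 2 := by
  have hmin : 0 < min 1 m := lt_min one_pos hc.lower_pos
  have hmax : 0 < max 1 M := lt_max_of_lt_left one_pos
  rw [sobolevSpace, ← SetLike.mem_coe, Submodule.topologicalClosure_coe, Metric.mem_closure_iff]
  refine ⟨fun happrox ε hε => ?_, fun happrox ε hε => ?_⟩
  · obtain ⟨Y, ⟨q, hq⟩, hdist⟩ := happrox (√(min 1 m) * ε) (by positivity)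
    refine ⟨q, lt_of_mul_lt_mul_left ?_ hmin.le⟩
    calc min 1 m * sobolevNormSq Ω ρ p11 p12 p21 p22 (u - pev q) (g - polyGrad q)
      _ ≤ ‖Z - Y‖ ^ 2 := (hρ.norm_sq_mem_Icc hc (hZ.sub hq)).1
      _ < (√(min 1 m) * ε) ^ 2 := by rw [← dist_eq_norm]; gcongr
      _ = min 1 m * ε ^ 2 := by rw [mul_pow, Real.sq_sqrt hmin.le]
  · obtain ⟨q, hnorm⟩ := happrox (ε / √(max 1 M)) (by positivity)
    obtain ⟨Y, hY⟩ := (hρ.isEnergyWeight hc).exists_energyRep_of_memL2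
      (hc.memL2_mul_iff.2 (hρ.isMomentWeight.memL2_pev q))
      (hρ.isMomentWeight.memL2M_pev p11 p12 p21 p22 _ _)
    refine ⟨Y, ⟨q, hY⟩, lt_of_pow_lt_pow_left₀ 2 hε.le ?_⟩
    calc dist Z Y ^ 2
      _ ≤ max 1 M * sobolevNormSq Ω ρ p11 p12 p21 p22 (u - pev q) (g - polyGrad q) := by
        rw [dist_eq_norm]; exact (hρ.norm_sq_mem_Icc hc (hZ.sub hY)).2
      _ < max 1 M * (ε / √(max 1 M)) ^ 2 := by gcongr
      _ = ε ^ 2 := by rw [div_pow, Real.sq_sqrt hmax.le, mul_div_cancel₀ _ hmax.ne']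

lemma memW_iff (hρ : IsSobolevWeight Ω ρ p11 p12 p21 p22) (hc : IsCoefficient Ω c m M)
    (hZ : EnergyRep Ω (fun x => c x * ρ x) ρ p11 p12 p22 u g Z) :
    MemW Ω ρ p11 p12 p21 p22 u g ↔ Z ∈ sobolevSpace Ω (fun x => c x * ρ x) ρ p11 p12 p22 :=
  ⟨fun hu => (hρ.mem_sobolevSpace_iff hc hZ).2 hu.2.2,
    fun hmem => ⟨hc.memL2_mul_iff.1 ((hρ.isEnergyWeight hc).memL2_of_energyRep hZ),
      hρ.isWeakGrad_of_mem_sobolevSpace hc hZ hmem, (hρ.mem_sobolevSpace_iff hc hZ).1 hmem⟩⟩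

lemma exists_energyRep_of_memW (hρ : IsSobolevWeight Ω ρ p11 p12 p21 p22)
    (hc : IsCoefficient Ω c m M) (hu : MemW Ω ρ p11 p12 p21 p22 u g) :
    ∃ Z ∈ sobolevSpace Ω (fun x => c x * ρ x) ρ p11 p12 p22,
      EnergyRep Ω (fun x => c x * ρ x) ρ p11 p12 p22 u g Z := by
  obtain ⟨Z, hZ⟩ :=
    (hρ.isEnergyWeight hc).exists_energyRep_of_memL2 (hc.memL2_mul_iff.2 hu.1) hu.2.1.1
  exact ⟨Z, (hρ.memW_iff hc hZ).1 hu, hZ⟩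

end IsSobolevWeight

/-! ### Weak solutions -/

/-- `u`, with weak gradient `g`, is a weak solution of `-div(ρΦ∇u) + cρu = ρf` with natural
boundary conditions, tested against `W(Ω, ρ, ρΦ)`. -/
def IsWeakSolution (Ω : Set (ℝ × ℝ)) (ρ : ℝ × ℝ → ℝ) (p11 p12 p21 p22 : Poly2)
    (c f u : ℝ × ℝ → ℝ) (g : ℝ × ℝ → ℝ × ℝ) : Prop :=
  ∀ (v : ℝ × ℝ → ℝ) (h : ℝ × ℝ → ℝ × ℝ), MemW Ω ρ p11 p12 p21 p22 v h →
    (∫ x in Ω, ρ x * bilPhi p11 p12 p21 p22 x (h x) (g x)) +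
        (∫ x in Ω, c x * u x * v x * ρ x) =
      ∫ x in Ω, v x * f x * ρ x

section WeakSolution

variable {Ω : Set (ℝ × ℝ)} {ρ c : ℝ × ℝ → ℝ} {p11 p12 p21 p22 : Poly2} {m M : ℝ}
  {u v f : ℝ × ℝ → ℝ} {g h : ℝ × ℝ → ℝ × ℝ} {Z V F : EnergySpace Ω}

lemma weak_identity_iff_inner_sub_eq_zero (hρ : IsSobolevWeight Ω ρ p11 p12 p21 p22)
    (hc : IsCoefficient Ω c m M)
    (hF : EnergyRep Ω (fun x => c x * ρ x) ρ p11 p12 p22 (fun x => f x / c x) 0 F)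
    (hZ : EnergyRep Ω (fun x => c x * ρ x) ρ p11 p12 p22 u g Z)
    (hV : EnergyRep Ω (fun x => c x * ρ x) ρ p11 p12 p22 v h V) :
    (∫ x in Ω, ρ x * bilPhi p11 p12 p21 p22 x (h x) (g x)) +
        (∫ x in Ω, c x * u x * v x * ρ x) = ∫ x in Ω, v x * f x * ρ x ↔
      inner ℝ V (F - Z) = 0 := by
  have hRHS : inner ℝ V F = ∫ x in Ω, v x * f x * ρ x := by
    simp [hρ.inner_representer hc hV hF, bilPhi]
  have hLHS : inner ℝ V Z = (∫ x in Ω, ρ x * bilPhi p11 p12 p21 p22 x (h x) (g x)) +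
      ∫ x in Ω, c x * u x * v x * ρ x := by
    rw [hV.inner_eq (hρ.isEnergyWeight hc) hZ, add_comm]
    congr 2 with x
    ring
  rw [inner_sub_right, sub_eq_zero, hRHS, hLHS, eq_comm]

lemma isWeakSolution_iff_starProjection_eq (hρ : IsSobolevWeight Ω ρ p11 p12 p21 p22)
    (hc : IsCoefficient Ω c m M)
    (hF : EnergyRep Ω (fun x => c x * ρ x) ρ p11 p12 p22 (fun x => f x / c x) 0 F)
    (hZ : EnergyRep Ω (fun x => c x * ρ x) ρ p11 p12 p22 u g Z)
    (hmem : Z ∈ sobolevSpace Ω (fun x => c x * ρ x) ρ p11 p12 p22) :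
    IsWeakSolution Ω ρ p11 p12 p21 p22 c f u g ↔
      (sobolevSpace Ω (fun x => c x * ρ x) ρ p11 p12 p22).starProjection F = Z := by
  refine ⟨fun hsol => ?_, ?_⟩
  · refine Submodule.eq_starProjection_of_mem_of_inner_eq_zero hmem fun V hVmem => ?_
    obtain ⟨v, h, hV⟩ := (hρ.isEnergyWeight hc).exists_energyRep V
    rw [real_inner_comm, ← weak_identity_iff_inner_sub_eq_zero hρ hc hF hZ hV]
    exact hsol v h ((hρ.memW_iff hc hV).2 hVmem)
  · rintro rfl v h hv
    obtain ⟨V, hVmem, hV⟩ := hρ.exists_energyRep_of_memW hc hv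
    rw [weak_identity_iff_inner_sub_eq_zero hρ hc hF hZ hV, real_inner_comm]
    exact Submodule.starProjection_inner_eq_zero F V hVmem

theorem weak_solution_exists_unique_general (hρ : IsSobolevWeight Ω ρ p11 p12 p21 p22)
    (hc : IsCoefficient Ω c m M) (hf : MemL2 Ω ρ f) :
    ∃ (u : ℝ × ℝ → ℝ) (g : ℝ × ℝ → ℝ × ℝ), MemW Ω ρ p11 p12 p21 p22 u g ∧
      IsWeakSolution Ω ρ p11 p12 p21 p22 c f u g ∧
      ∀ (u' : ℝ × ℝ → ℝ) (g' : ℝ × ℝ → ℝ × ℝ), MemW Ω ρ p11 p12 p21 p22 u' g' →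
        IsWeakSolution Ω ρ p11 p12 p21 p22 c f u' g' → u' =ᵐ[volume.restrict Ω] u := by
  have hzero : MemL2M Ω ρ p11 p12 p21 p22 0 := ⟨measurable_zero, by simp [bilPhi]⟩
  obtain ⟨F, hF⟩ := hρ.exists_representer hc hf hzero
  have hmem := Submodule.starProjection_apply_mem
    (sobolevSpace Ω (fun x => c x * ρ x) ρ p11 p12 p22) F
  obtain ⟨u, g, hu⟩ := (hρ.isEnergyWeight hc).exists_energyRep
    ((sobolevSpace Ω (fun x => c x * ρ x) ρ p11 p12 p22).starProjection F)
  refine ⟨u, g, (hρ.memW_iff hc hu).2 hmem,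
    (isWeakSolution_iff_starProjection_eq hρ hc hF hu hmem).2 rfl, fun u' g' hu' hsol => ?_⟩
  obtain ⟨Z, hZmem, hZ⟩ := hρ.exists_energyRep_of_memW hc hu'
  obtain rfl := (isWeakSolution_iff_starProjection_eq hρ hc hF hZ hZmem).1 hsol
  exact hZ.ae_eq (hρ.isEnergyWeight hc) hu

end WeakSolution

/-! ### Symmetries of the triangle -/

lemma measurableSet_Ttri : MeasurableSet Ttri :=
  (measurableSet_lt measurable_const measurable_fst).inter
    ((measurableSet_lt measurable_const measurable_snd).inter
      (measurableSet_lt (measurable_fst.add measurable_snd) measurable_const))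

lemma third_coord_pos {x : ℝ × ℝ} (hx : x ∈ Ttri) : 0 < 1 - x.1 - x.2 := by
  linarith [hx.2.2]

/-- The affine symmetry of the triangle that exchanges the barycentric coordinates `x₂` and
`1 - x₁ - x₂`. -/
def triangleReflection : ℝ × ℝ ≃ᵐ ℝ × ℝ :=
  MeasurableEquiv.ofInvolutive (fun x => (x.1, 1 - x.1 - x.2))
    (fun x => Prod.ext rfl (sub_sub_cancel _ _)) (by fun_prop)

lemma measurePreserving_triangleReflection : MeasurePreserving triangleReflection := by
  have hfiber : ∀ a : ℝ, Measure.map (fun b => 1 - a - b) volume = volume := fun a =>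
    (Measure.measurePreserving_sub_left volume (1 - a)).map_eq
  exact (MeasurePreserving.id volume).skew_product (g := fun a b => 1 - a - b)
    (by unfold Function.uncurry; fun_prop) (Eventually.of_forall hfiber)

lemma triangleReflection_preimage_Ttri : triangleReflection ⁻¹' Ttri = Ttri := by
  ext x
  change (0 < x.1 ∧ 0 < 1 - x.1 - x.2 ∧ x.1 + (1 - x.1 - x.2) < 1) ↔
    0 < x.1 ∧ 0 < x.2 ∧ x.1 + x.2 < 1
  grind

lemma swap_preimage_Ttri : Prod.swap ⁻¹' Ttri = Ttri := by
  ext x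
  change (0 < x.2 ∧ 0 < x.1 ∧ x.2 + x.1 < 1) ↔ 0 < x.1 ∧ 0 < x.2 ∧ x.1 + x.2 < 1
  grind

lemma setIntegral_Ttri_comp_reflection (F : ℝ × ℝ → ℝ) :
    ∫ x in Ttri, F (x.1, 1 - x.1 - x.2) = ∫ x in Ttri, F x := by
  have hcomp := measurePreserving_triangleReflection.setIntegral_preimage_emb
    triangleReflection.measurableEmbedding F Ttri
  rwa [triangleReflection_preimage_Ttri] at hcomp

lemma setIntegral_Ttri_comp_swap (F : ℝ × ℝ → ℝ) :
    ∫ x in Ttri, F (x.2, x.1) = ∫ x in Ttri, F x := by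
  have hcomp := (Measure.measurePreserving_swap (μ := volume) (ν := volume))
    |>.setIntegral_preimage_emb MeasurableEquiv.prodComm.measurableEmbedding F Ttri
  rwa [swap_preimage_Ttri] at hcomp

lemma integrableOn_Ttri_comp_reflection {F : ℝ × ℝ → ℝ} (hF : IntegrableOn F Ttri) :
    IntegrableOn (fun x => F (x.1, 1 - x.1 - x.2)) Ttri := by
  have hcomp := (measurePreserving_triangleReflection.integrableOn_comp_preimage
    triangleReflection.measurableEmbedding).2 hF
  rwa [triangleReflection_preimage_Ttri] at hcomp

lemma integrableOn_Ttri_comp_swap {F : ℝ × ℝ → ℝ} (hF : IntegrableOn F Ttri) :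
    IntegrableOn (fun x => F (x.2, x.1)) Ttri := by
  have hcomp := (Measure.measurePreserving_swap (μ := volume) (ν := volume)
    |>.integrableOn_comp_preimage MeasurableEquiv.prodComm.measurableEmbedding).2 hF
  rwa [swap_preimage_Ttri] at hcomp

/-! ### The Jacobi weight on the triangle -/

lemma rhoT_reflection (α β γ : ℝ) (x : ℝ × ℝ) :
    rhoT α β γ (x.1, 1 - x.1 - x.2) = rhoT α γ β x := by
  simp only [rhoT, sub_sub_cancel, mul_right_comm]

lemma rhoT_swap (α β γ : ℝ) (x : ℝ × ℝ) : rhoT α β γ (x.2, x.1) = rhoT β α γ x := by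
  simp only [rhoT, sub_right_comm, mul_comm (x.2 ^ α)]

lemma measurable_rhoT (α β γ : ℝ) : Measurable (rhoT α β γ) := by
  unfold rhoT
  fun_prop

lemma rhoT_pos (α β γ : ℝ) {x : ℝ × ℝ} (hx : x ∈ Ttri) : 0 < rhoT α β γ x := by
  have h3 := third_coord_pos hx
  obtain ⟨h1, h2, -⟩ := hx
  unfold rhoT
  positivity

lemma integrableOn_rhoT_zero_right {α β : ℝ} (hα : -1 < α) (hβ : -1 < β) :
    IntegrableOn (rhoT α β 0) Ttri := by
  have hrpow : ∀ {a : ℝ}, -1 < a → IntegrableOn (fun t : ℝ => t ^ a) (Set.Ioc 0 1) := fun ha =>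
    (intervalIntegrable_iff_integrableOn_Ioc_of_le zero_le_one).1
      (intervalIntegral.intervalIntegrable_rpow' ha)
  have hprod : IntegrableOn (fun x : ℝ × ℝ => x.1 ^ α * x.2 ^ β)
      (Set.Ioc (0 : ℝ) 1 ×ˢ Set.Ioc (0 : ℝ) 1) := by
    have := Integrable.mul_prod (hrpow hα) (hrpow hβ)
    rwa [Measure.prod_restrict] at this
  have heq : rhoT α β 0 = fun x => x.1 ^ α * x.2 ^ β := by
    ext x
    rw [rhoT, Real.rpow_zero, mul_one]
  rw [heq]
  refine hprod.mono_set ?_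
  rintro x ⟨h1, h2, h12⟩
  exact ⟨⟨h1, by linarith⟩, h2, by linarith⟩

lemma integrableOn_rhoT_zero_middle {α γ : ℝ} (hα : -1 < α) (hγ : -1 < γ) :
    IntegrableOn (rhoT α 0 γ) Ttri := by
  simpa only [rhoT_reflection] using
    integrableOn_Ttri_comp_reflection (integrableOn_rhoT_zero_right hα hγ)

lemma integrableOn_rhoT_zero_left {β γ : ℝ} (hβ : -1 < β) (hγ : -1 < γ) :
    IntegrableOn (rhoT 0 β γ) Ttri := by
  simpa only [rhoT_swap] using
    integrableOn_Ttri_comp_swap (integrableOn_rhoT_zero_middle hβ hγ)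

lemma rpow_le_one_add_rpow (a : ℝ) {s t : ℝ} (hs : 0 < s) (hst : s ≤ t) (ht : t ≤ 1) :
    t ^ a ≤ 1 + s ^ a := by
  rcases le_total 0 a with ha | ha
  · exact (Real.rpow_le_one (hs.le.trans hst) ht ha).trans
      (le_add_of_nonneg_right (Real.rpow_nonneg hs.le a))
  · exact (Real.rpow_le_rpow_of_nonpos hs hst ha).trans (le_add_of_nonneg_left zero_le_one)

/-- Some barycentric coordinate is at least `1/3`, so the corresponding factor is bounded. -/
lemma rhoT_le_sum (α β γ : ℝ) {x : ℝ × ℝ} (hx : x ∈ Ttri) :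
    rhoT α β γ x ≤ (1 + (1 / 3) ^ α) * rhoT 0 β γ x + (1 + (1 / 3) ^ β) * rhoT α 0 γ x +
      (1 + (1 / 3) ^ γ) * rhoT α β 0 x := by
  have h3 := third_coord_pos hx
  have hα := rhoT_pos 0 β γ hx
  have hβ := rhoT_pos α 0 γ hx
  have hγ := rhoT_pos α β 0 hx
  obtain ⟨h1, h2, -⟩ := hx
  have hbound : ∀ (a : ℝ) {t : ℝ}, 1 / 3 ≤ t → t ≤ 1 → t ^ a ≤ 1 + (1 / 3) ^ a :=
    fun a _ => rpow_le_one_add_rpow a (by norm_num)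
  have : 1 / 3 ≤ x.1 ∨ 1 / 3 ≤ x.2 ∨ 1 / 3 ≤ 1 - x.1 - x.2 := by grind
  rcases this with hx1 | hx2 | hx3
  · calc rhoT α β γ x = x.1 ^ α * rhoT 0 β γ x := by simp [rhoT, mul_assoc]
      _ ≤ (1 + (1 / 3) ^ α) * rhoT 0 β γ x := by
        gcongr; exact hbound α hx1 (by linarith)
      _ ≤ _ := by rw [add_assoc]; exact le_add_of_nonneg_right (by positivity)
  · calc rhoT α β γ x = x.2 ^ β * rhoT α 0 γ x := by simp only [rhoT, Real.rpow_zero]; ring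
      _ ≤ (1 + (1 / 3) ^ β) * rhoT α 0 γ x := by
        gcongr; exact hbound β hx2 (by linarith)
      _ ≤ _ := by
        rw [add_right_comm]; exact le_add_of_nonneg_left (by positivity)
  · calc rhoT α β γ x = (1 - x.1 - x.2) ^ γ * rhoT α β 0 x := by
          simp only [rhoT, Real.rpow_zero]; ring
      _ ≤ (1 + (1 / 3) ^ γ) * rhoT α β 0 x := by
        gcongr; exact hbound γ hx3 (by linarith)
      _ ≤ _ := le_add_of_nonneg_left (by positivity)

section JacobiWeight

variable {α β γ : ℝ}

lemma integrableOn_rhoT (hα : -1 < α) (hβ : -1 < β) (hγ : -1 < γ) :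
    IntegrableOn (rhoT α β γ) Ttri := by
  have hα0 := (integrableOn_rhoT_zero_left hβ hγ).const_mul (1 + (1 / 3) ^ α)
  have hβ0 := (integrableOn_rhoT_zero_middle hα hγ).const_mul (1 + (1 / 3) ^ β)
  have hγ0 := (integrableOn_rhoT_zero_right hα hβ).const_mul (1 + (1 / 3) ^ γ)
  refine ((hα0.add hβ0).add hγ0).mono' (measurable_rhoT α β γ).aestronglyMeasurable ?_
  filter_upwards [ae_restrict_mem measurableSet_Ttri] with x hx
  rw [Real.norm_of_nonneg (rhoT_pos α β γ hx).le]
  exact rhoT_le_sum α β γ hx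

lemma integrableOn_rhoT_mul (hα : -1 < α) (hβ : -1 < β) (hγ : -1 < γ) {φ : ℝ × ℝ → ℝ}
    (hφ : Continuous φ) : IntegrableOn (fun x => rhoT α β γ x * φ x) Ttri := by
  obtain ⟨C, hC⟩ := (isCompact_Icc (a := (0 : ℝ × ℝ)) (b := 1)).exists_bound_of_continuousOn
    hφ.continuousOn
  refine (integrableOn_rhoT hα hβ hγ).mul_bdd (c := C) hφ.aestronglyMeasurable ?_
  filter_upwards [ae_restrict_mem measurableSet_Ttri] with x ⟨h1, h2, h12⟩
  exact hC x ⟨⟨h1.le, h2.le⟩, (by linarith : x.1 ≤ 1), (by linarith : x.2 ≤ 1)⟩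

lemma isMomentWeight_rhoT (hα : -1 < α) (hβ : -1 < β) (hγ : -1 < γ) :
    IsMomentWeight Ttri (rhoT α β γ) := by
  refine ⟨measurable_rhoT α β γ, ?_, fun m n => ?_⟩
  · filter_upwards [ae_restrict_mem measurableSet_Ttri] with x hx using rhoT_pos α β γ hx
  · simpa only [mul_comm (rhoT α β γ _)] using
      integrableOn_rhoT_mul hα hβ hγ (φ := fun x => |x.1| ^ m * |x.2| ^ n) (by fun_prop)

end JacobiWeight

lemma hasFDerivAt_rhoT (α β γ : ℝ) {x : ℝ × ℝ} (hx : x ∈ Ttri) :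
    HasFDerivAt (rhoT α β γ)
      ((rhoT α β γ x * (α / x.1 - γ / (1 - x.1 - x.2))) • ContinuousLinearMap.fst ℝ ℝ ℝ +
        (rhoT α β γ x * (β / x.2 - γ / (1 - x.1 - x.2))) • ContinuousLinearMap.snd ℝ ℝ ℝ) x := by
  have h3 := third_coord_pos hx
  obtain ⟨h1, h2, -⟩ := hx
  have hfst := hasFDerivAt_fst (𝕜 := ℝ) (p := x)
  have hsnd := hasFDerivAt_snd (𝕜 := ℝ) (p := x)
  have hα := hfst.rpow_const (p := α) (Or.inl h1.ne')
  have hβ := hsnd.rpow_const (p := β) (Or.inl h2.ne')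
  have hγ := ((hfst.const_sub 1).fun_sub hsnd).rpow_const (p := γ) (Or.inl h3.ne')
  refine ((hα.fun_mul hβ).fun_mul hγ).congr_fderiv ?_
  ext
  · simp [rhoT, Real.rpow_sub_one h1.ne', Real.rpow_sub_one h2.ne', Real.rpow_sub_one h3.ne']
    ring
  · simp [rhoT, Real.rpow_sub_one h1.ne', Real.rpow_sub_one h2.ne', Real.rpow_sub_one h3.ne']
    ring

/-! ### Vanishing boundary flux on the triangle -/

lemma indicator_Ttri_mk (D : ℝ × ℝ → ℝ) {y : ℝ} (hy : 0 < y) :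
    (fun t => Ttri.indicator D (t, y)) = (Set.Ioo 0 (1 - y)).indicator fun t => D (t, y) := by
  ext t
  have hmem : (t, y) ∈ Ttri ↔ t ∈ Set.Ioo 0 (1 - y) := by
    simp [Ttri, hy, lt_sub_iff_add_lt]
  by_cases ht : t ∈ Set.Ioo 0 (1 - y)
  · rw [Set.indicator_of_mem (hmem.2 ht), Set.indicator_of_mem ht]
  · rw [Set.indicator_of_notMem (hmem.not.2 ht), Set.indicator_of_notMem ht]

lemma indicator_Ttri_mk_of_notMem (D : ℝ × ℝ → ℝ) {y : ℝ} (hy : y ∉ Set.Ioo (0 : ℝ) 1) :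
    (fun t => Ttri.indicator D (t, y)) = 0 := by
  ext t
  refine Set.indicator_of_notMem (fun hmem => hy ?_) _
  obtain ⟨h1, h2, h12⟩ := hmem
  exact ⟨h2, by linarith⟩

/-- Fubini, then the fundamental theorem of calculus on each horizontal slice. -/
lemma setIntegral_Ttri_eq_zero_of_hasDerivAt {G D : ℝ × ℝ → ℝ} (hD : IntegrableOn D Ttri)
    (hcont : ∀ y ∈ Set.Ioo (0 : ℝ) 1, ContinuousOn (fun t => G (t, y)) (Set.Icc 0 (1 - y)))
    (hderiv : ∀ x ∈ Ttri, HasDerivAt (fun t => G (t, x.2)) (D x) x.1)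
    (hleft : ∀ y ∈ Set.Ioo (0 : ℝ) 1, G (0, y) = 0)
    (hright : ∀ y ∈ Set.Ioo (0 : ℝ) 1, G (1 - y, y) = 0) :
    ∫ x in Ttri, D x = 0 := by
  have hind : Integrable (Ttri.indicator D) (volume.prod volume) :=
    (integrable_indicator_iff measurableSet_Ttri).2 hD
  rw [← integral_indicator measurableSet_Ttri, Measure.volume_eq_prod, integral_prod_symm _ hind]
  refine integral_eq_zero_of_ae ?_
  filter_upwards [hind.prod_left_ae] with y hslice
  by_cases hy : y ∈ Set.Ioo (0 : ℝ) 1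
  · have hle : 0 ≤ 1 - y := by linarith [hy.2]
    rw [indicator_Ttri_mk D hy.1] at hslice ⊢
    rw [integrable_indicator_iff measurableSet_Ioo, ← integrableOn_Ioc_iff_integrableOn_Ioo,
      ← intervalIntegrable_iff_integrableOn_Ioc_of_le hle] at hslice
    rw [integral_indicator measurableSet_Ioo, ← integral_Ioc_eq_integral_Ioo,
      ← intervalIntegral.integral_of_le hle,
      intervalIntegral.integral_eq_sub_of_hasDerivAt_of_le hle (hcont y hy)
        (fun t ht => hderiv (t, y) ⟨ht.1, hy.1, lt_sub_iff_add_lt.1 ht.2⟩) hslice,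
      hleft y hy, hright y hy, sub_zero, Pi.zero_apply]
  · simp [indicator_Ttri_mk_of_notMem D hy]

section Flux

variable {α β γ : ℝ} {w w' : ℝ × ℝ → ℝ}

/-- The integrand is `∂₁(x₁ x₃ ρ w)`, where `x₃ = 1 - x₁ - x₂`. -/
lemma setIntegral_flux_fst (hα : -1 < α) (hβ : -1 < β) (hγ : -1 < γ) (hw : Continuous w)
    (hw' : Continuous w') (hderiv : ∀ x, HasDerivAt (fun t => w (t, x.2)) (w' x) x.1) :
    ∫ x in Ttri, rhoT α β γ x * (((α + 1) * (1 - x.1 - x.2) - (γ + 1) * x.1) * w x +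
      x.1 * (1 - x.1 - x.2) * w' x) = 0 := by
  have hα' : 0 < α + 1 := by linarith
  have hγ' : 0 < γ + 1 := by linarith
  refine setIntegral_Ttri_eq_zero_of_hasDerivAt (G := fun x => rhoT (α + 1) β (γ + 1) x * w x)
    (integrableOn_rhoT_mul hα hβ hγ (by fun_prop)) (fun y _ => ?_) (fun x hx => ?_)
    (fun y _ => ?_) (fun y _ => ?_)
  · have hα_cont : Continuous fun t : ℝ => t ^ (α + 1) := Real.continuous_rpow_const hα'.le
    have hγ_cont : Continuous fun t : ℝ => (1 - t - y) ^ (γ + 1) :=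
      (Real.continuous_rpow_const hγ'.le).comp (by fun_prop : Continuous fun t : ℝ => 1 - t - y)
    have hw_cont : Continuous fun t => w (t, y) := by fun_prop
    exact (((hα_cont.mul_const (y ^ β)).fun_mul hγ_cont).fun_mul hw_cont).continuousOn
  · have h3 := third_coord_pos hx
    have hfst := Real.hasDerivAt_rpow_const (x := x.1) (p := α + 1) (Or.inl hx.1.ne')
    have hthird := (((hasDerivAt_id x.1).const_sub 1).sub_const x.2).rpow_const
      (p := γ + 1) (Or.inl h3.ne')
    refine (((hfst.mul_const (x.2 ^ β)).fun_mul hthird).fun_mul (hderiv x)).congr_deriv ?_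
    simp only [rhoT, id, add_sub_cancel_right]
    rw [Real.rpow_add_one hx.1.ne', Real.rpow_add_one h3.ne']
    ring
  · simp [rhoT, Real.zero_rpow hα'.ne']
  · simp [rhoT, Real.zero_rpow hγ'.ne']

lemma setIntegral_flux_snd (hα : -1 < α) (hβ : -1 < β) (hγ : -1 < γ) (hw : Continuous w)
    (hw' : Continuous w') (hderiv : ∀ x, HasDerivAt (fun t => w (x.1, t)) (w' x) x.2) :
    ∫ x in Ttri, rhoT α β γ x * (((β + 1) * (1 - x.1 - x.2) - (γ + 1) * x.2) * w x +
      x.2 * (1 - x.1 - x.2) * w' x) = 0 := by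
  have hflux := setIntegral_flux_fst hβ hα hγ (w := fun x => w (x.2, x.1))
    (w' := fun x => w' (x.2, x.1)) (by fun_prop) (by fun_prop) fun x => hderiv (x.2, x.1)
  rw [← hflux, ← setIntegral_Ttri_comp_swap]
  simp only [rhoT_swap, sub_right_comm]

lemma setIntegral_flux_diagonal (hα : -1 < α) (hβ : -1 < β) (hγ : -1 < γ) (hw : Continuous w)
    (hw' : Continuous w')
    (hderiv : ∀ x, HasDerivAt (fun t => w (t, x.1 + x.2 - t)) (w' x) x.1) :
    ∫ x in Ttri, rhoT α β γ x * (((α + 1) * x.2 - (β + 1) * x.1) * w x +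
      x.1 * x.2 * w' x) = 0 := by
  have hflux := setIntegral_flux_fst hα hγ hβ (w := fun x => w (x.1, 1 - x.1 - x.2))
    (w' := fun x => w' (x.1, 1 - x.1 - x.2)) (by fun_prop) (by fun_prop) fun x => by
      refine (hderiv (x.1, 1 - x.1 - x.2)).congr_of_eventuallyEq (Eventually.of_forall fun t => ?_)
      ring_nf
  rw [← hflux, ← setIntegral_Ttri_comp_reflection]
  simp only [rhoT_reflection]

end Flux

/-! ### The matrix `Φ` on the triangle -/

lemma pev_q11 (x : ℝ × ℝ) : pev q11 x = x.1 * (1 - x.1) := by simp [pev, q11]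

lemma pev_q12 (x : ℝ × ℝ) : pev q12 x = -(x.1 * x.2) := by simp [pev, q12]

lemma pev_q22 (x : ℝ × ℝ) : pev q22 x = x.2 * (1 - x.2) := by simp [pev, q22]

lemma bilPhi_q_eq (x ζ ξ : ℝ × ℝ) :
    bilPhi q11 q12 q12 q22 x ζ ξ =
      x.1 * (1 - x.1 - x.2) * (ζ.1 * ξ.1) + x.2 * (1 - x.1 - x.2) * (ζ.2 * ξ.2) +
        x.1 * x.2 * ((ζ.1 - ζ.2) * (ξ.1 - ξ.2)) := by
  simp only [bilPhi, pev_q11, pev_q12, pev_q22]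
  ring

lemma symPosDef_Ttri : SymPosDef Ttri q11 q12 q12 q22 := by
  refine ⟨rfl, fun x hx ζ hζ => ?_⟩
  have h3 := third_coord_pos hx
  obtain ⟨h1, h2, -⟩ := hx
  have hζ' : ζ.1 ≠ 0 ∨ ζ.2 ≠ 0 := by
    contrapose! hζ
    exact Prod.ext hζ.1 hζ.2
  rw [bilPhi_q_eq]
  simp only [← pow_two]
  rcases hζ' with hζ1 | hζ2 <;> positivity

lemma polyGrad_q11 (x : ℝ × ℝ) : polyGrad q11 x = (1 - 2 * x.1, 0) := by
  ext <;> simp [polyGrad, pev, q11]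
  ring

lemma polyGrad_q12 (x : ℝ × ℝ) : polyGrad q12 x = (-x.2, -x.1) := by
  ext <;> simp [polyGrad, pev, q12]

lemma polyGrad_q22 (x : ℝ × ℝ) : polyGrad q22 x = (0, 1 - 2 * x.2) := by
  ext <;> simp [polyGrad, pev, q22]
  ring

section PearsonEquation

variable {α β γ : ℝ} {x : ℝ × ℝ}

lemma divRhoPhi_rhoT_one_zero (hx : x ∈ Ttri) :
    divRhoPhi (rhoT α β γ) q11 q12 q12 q22 1 0 x =
      rhoT α β γ x * (α + 1 - (α + β + γ + 3) * x.1) := by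
  have hρ := hasFDerivAt_rhoT α β γ hx
  have h1 := hx.1.ne'
  have h2 := hx.2.1.ne'
  have h3 := (third_coord_pos hx).ne'
  simp only [divRhoPhi_eq_fderiv_mul_pev, mul_one, mul_zero, add_zero,
    fderiv_mul_pev hρ.differentiableAt, hρ.fderiv]
  simp only [add_apply, smul_apply, ContinuousLinearMap.coe_fst', ContinuousLinearMap.coe_snd',
    smul_eq_mul, mul_one, mul_zero, add_zero, zero_add,
    pev_q11, pev_q12, polyGrad_q11, polyGrad_q12]
  field_simp
  ring

lemma divRhoPhi_rhoT_zero_one (hx : x ∈ Ttri) :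
    divRhoPhi (rhoT α β γ) q11 q12 q12 q22 0 1 x =
      rhoT α β γ x * (β + 1 - (α + β + γ + 3) * x.2) := by
  have hρ := hasFDerivAt_rhoT α β γ hx
  have h1 := hx.1.ne'
  have h2 := hx.2.1.ne'
  have h3 := (third_coord_pos hx).ne'
  simp only [divRhoPhi_eq_fderiv_mul_pev, mul_one, mul_zero, zero_add,
    fderiv_mul_pev hρ.differentiableAt, hρ.fderiv]
  simp only [add_apply, smul_apply, ContinuousLinearMap.coe_fst', ContinuousLinearMap.coe_snd',
    smul_eq_mul, mul_one, mul_zero, add_zero, zero_add,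
    pev_q12, pev_q22, polyGrad_q12, polyGrad_q22]
  field_simp
  ring

lemma divRhoPhi_rhoT_eq_fluxes (v1 v2 : Poly2) (hx : x ∈ Ttri) :
    divRhoPhi (rhoT α β γ) q11 q12 q12 q22 v1 v2 x =
      rhoT α β γ x * (((α + 1) * (1 - x.1 - x.2) - (γ + 1) * x.1) * pev v1 x +
          x.1 * (1 - x.1 - x.2) * (polyGrad v1 x).1) +
        rhoT α β γ x * (((β + 1) * (1 - x.1 - x.2) - (γ + 1) * x.2) * pev v2 x +
          x.2 * (1 - x.1 - x.2) * (polyGrad v2 x).2) +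
        rhoT α β γ x * (((α + 1) * x.2 - (β + 1) * x.1) * pev (v1 - v2) x +
          x.1 * x.2 * ((polyGrad (v1 - v2) x).1 - (polyGrad (v1 - v2) x).2)) := by
  rw [divRhoPhi_eq_columns (hasFDerivAt_rhoT α β γ hx).differentiableAt,
    divRhoPhi_rhoT_one_zero hx, divRhoPhi_rhoT_zero_one hx]
  simp only [pev_q11, pev_q12, pev_q22, pev_sub, polyGrad_sub, Prod.fst_sub, Prod.snd_sub]
  ring

lemma setIntegral_divRhoPhi_rhoT (hα : -1 < α) (hβ : -1 < β) (hγ : -1 < γ) (v1 v2 : Poly2) :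
    ∫ x in Ttri, divRhoPhi (rhoT α β γ) q11 q12 q12 q22 v1 v2 x = 0 := by
  have hpev := continuous_pev
  have hgrad := continuous_polyGrad
  have hflux₁ := setIntegral_flux_fst hα hβ hγ (hpev v1) (hgrad v1).fst fun x =>
    (hasDerivAt_pev_comp ((hasDerivAt_id x.1).prodMk (hasDerivAt_const x.1 x.2))).congr_deriv
      (by simp)
  have hflux₂ := setIntegral_flux_snd hα hβ hγ (hpev v2) (hgrad v2).snd fun x =>
    (hasDerivAt_pev_comp ((hasDerivAt_const x.2 x.1).prodMk (hasDerivAt_id x.2))).congr_deriv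
      (by simp)
  have hflux₃ := setIntegral_flux_diagonal hα hβ hγ (hpev (v1 - v2))
    ((hgrad (v1 - v2)).fst.fun_sub (hgrad (v1 - v2)).snd) fun x =>
    (hasDerivAt_pev_comp ((hasDerivAt_id x.1).prodMk
      ((hasDerivAt_id x.1).const_sub (x.1 + x.2)))).congr_deriv (by simp [sub_eq_add_neg])
  rw [setIntegral_congr_fun measurableSet_Ttri fun x => divRhoPhi_rhoT_eq_fluxes v1 v2,
    integral_add, integral_add, hflux₁, hflux₂, hflux₃, add_zero, add_zero]
  · exact integrableOn_rhoT_mul hα hβ hγ (by fun_prop)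
  · exact integrableOn_rhoT_mul hα hβ hγ (by fun_prop)
  · exact (integrableOn_rhoT_mul hα hβ hγ (by fun_prop)).add
      (integrableOn_rhoT_mul hα hβ hγ (by fun_prop))
  · exact integrableOn_rhoT_mul hα hβ hγ (by fun_prop)

lemma isSobolevWeight_rhoT (hα : -1 < α) (hβ : -1 < β) (hγ : -1 < γ) :
    IsSobolevWeight Ttri (rhoT α β γ) q11 q12 q12 q22 where
  measurableSet := measurableSet_Ttri
  isMomentWeight := isMomentWeight_rhoT hα hβ hγ
  symPosDef := symPosDef_Ttri
  differentiableAt x hx := (hasFDerivAt_rhoT α β γ hx).differentiableAt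
  exists_pearson := by
    refine ⟨.C (α + 1) - .C (α + β + γ + 3) * .X 0, .C (β + 1) - .C (α + β + γ + 3) * .X 1,
      fun x hx => ⟨?_, ?_⟩⟩
    · simp [divRhoPhi_rhoT_one_zero hx, pev]
    · simp [divRhoPhi_rhoT_zero_one hx, pev]
  setIntegral_divRhoPhi := setIntegral_divRhoPhi_rhoT hα hβ hγ

end PearsonEquation

lemma isCoefficient_two_add_sq_add_sq :
    IsCoefficient Ttri (fun x => 2 + x.1 ^ 2 + x.2 ^ 2) 2 4 where
  measurable := by fun_prop
  lower_pos := two_pos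
  lower_le := Eventually.of_forall fun x => by nlinarith [sq_nonneg x.1, sq_nonneg x.2]
  le_upper := by
    filter_upwards [ae_restrict_mem measurableSet_Ttri] with x ⟨h1, h2, h12⟩
    nlinarith

/-- Existence and uniqueness (up to a.e. equality) of the weak solution
of the degenerate Neumann problem on the triangle. -/
theorem weak_solution_exists_unique
    (α β γ : ℝ) (hα : -1 < α) (hβ : -1 < β) (hγ : -1 < γ)
    (f : ℝ × ℝ → ℝ) (hf : MemL2 Ttri (rhoT α β γ) f) :
    ∃ (u : ℝ × ℝ → ℝ) (g : ℝ × ℝ → ℝ × ℝ),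
      MemW Ttri (rhoT α β γ) q11 q12 q12 q22 u g ∧
      (∀ (v : ℝ × ℝ → ℝ) (h : ℝ × ℝ → ℝ × ℝ),
        MemW Ttri (rhoT α β γ) q11 q12 q12 q22 v h →
          (∫ x in Ttri, rhoT α β γ x * bilPhi q11 q12 q12 q22 x (h x) (g x)) +
              (∫ x in Ttri, (2 + x.1 ^ 2 + x.2 ^ 2) * u x * v x * rhoT α β γ x) =
            ∫ x in Ttri, v x * f x * rhoT α β γ x) ∧
      (∀ (u' : ℝ × ℝ → ℝ) (g' : ℝ × ℝ → ℝ × ℝ),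
        MemW Ttri (rhoT α β γ) q11 q12 q12 q22 u' g' →
        (∀ (v : ℝ × ℝ → ℝ) (h : ℝ × ℝ → ℝ × ℝ),
          MemW Ttri (rhoT α β γ) q11 q12 q12 q22 v h →
            (∫ x in Ttri, rhoT α β γ x * bilPhi q11 q12 q12 q22 x (h x) (g' x)) +
                (∫ x in Ttri, (2 + x.1 ^ 2 + x.2 ^ 2) * u' x * v x * rhoT α β γ x) =
              ∫ x in Ttri, v x * f x * rhoT α β γ x) →
        u' =ᵐ[volume.restrict Ttri] u) := by
  exact weak_solution_exists_unique_general (isSobolevWeight_rhoT hα hβ hγ)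
    isCoefficient_two_add_sq_add_sq hf
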